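/- arXiv:1401.4014 — 7 statements merged into one kernel-verified Lean document; each statement's English description precedes it below -/
import Mathlib

section
/- Define P_L : ℝ⁴ → ℝ⁴ by P_L(s,τ,u,v) = (s, (2/c₀)·‖R(u,v,s)‖, (2τ/c₀)·⟨R̂(u,v,s), γ'(s)⟩, τ). Fix a point (s₀,τ₀,u₀,v₀) with τ₀ ≠ 0. Then the total derivative (Fréchet derivative) of P_L at (s₀,τ₀,u₀,v₀) is an invertible linear map if and only if the two vectors in ℝ², a = (⟨R̂, ∂ψ/∂u⟩, ⟨R̂, ∂ψ/∂v⟩) and b = (∂/∂u ⟨R̂, γ'(s)⟩, ∂/∂v ⟨R̂, γ'(s)⟩), evaluated at (s₀,u₀,v₀), are linearly independent. -/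
/-!
In the coordinates `(s, τ, u, v)` the outer components of `P_L` are `s` and `τ`, so a kernel vector
of the derivative has the form `(0, 0, x, y)`, and the derivative is invertible iff the `(u, v)`-block
of the two middle components is. Up to the nonzero factors `2 / c₀` and `2 τ₀ / c₀`, the rows of that
block are the `(u, v)`-gradients of `‖R‖` and of `⟨R̂, γ'⟩`. The second row is `b` by definition, and
the first is `a` because the directional derivative of `‖R‖` is `⟨R̂, R'⟩`. Both sides of the
equivalence then say that the determinant of the rows `a`, `b` is nonzero.
-/

open scoped RealInnerProductSpace

/-- The unit vector `R̂(u,v,s) = (ψ(u,v) − γ(s))/‖ψ(u,v) − γ(s)‖`. -/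
noncomputable def Rhat (ψ : ℝ × ℝ → EuclideanSpace ℝ (Fin 3))
    (γ : ℝ → EuclideanSpace ℝ (Fin 3)) (u v s : ℝ) : EuclideanSpace ℝ (Fin 3) :=
  ‖ψ (u, v) - γ s‖⁻¹ • (ψ (u, v) - γ s)

/-- The coordinate expression of the left projection of the canonical relation:
`P_L(s,τ,u,v) = (s, (2/c₀)‖R(u,v,s)‖, (2τ/c₀)⟨R̂(u,v,s), γ'(s)⟩, τ)`. -/
noncomputable def PL (c₀ : ℝ) (ψ : ℝ × ℝ → EuclideanSpace ℝ (Fin 3))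
    (γ : ℝ → EuclideanSpace ℝ (Fin 3)) (x : ℝ × ℝ × ℝ × ℝ) : ℝ × ℝ × ℝ × ℝ :=
  (x.1, (2 / c₀) * ‖ψ (x.2.2.1, x.2.2.2) - γ x.1‖,
    (2 * x.2.1 / c₀) * ⟪Rhat ψ γ x.2.2.1 x.2.2.2 x.1, deriv γ x.1⟫, x.2.1)

/-- Two vectors in the plane are independent iff their determinant is nonzero. -/
theorem linearIndependent_pair_iff_det (a₁ a₂ b₁ b₂ : ℝ) :
    LinearIndependent ℝ ![((a₁, a₂) : ℝ × ℝ), (b₁, b₂)] ↔ a₁ * b₂ - a₂ * b₁ ≠ 0 := by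
  rw [LinearIndependent.pair_iff]
  constructor
  · intro h hd
    -- When the determinant vanishes, `b₂ a = a₂ b` and `b₁ a = a₁ b`.
    have h1 := h b₂ (-a₂) (by ext <;> simp <;> linarith)
    have h2 := h b₁ (-a₁) (by ext <;> simp <;> linarith)
    have h3 := h 1 0 (by
      have := neg_eq_zero.1 h1.2
      have := neg_eq_zero.1 h2.2
      ext <;> simp <;> assumption)
    exact one_ne_zero h3.1
  · intro hd x y hxy
    have e1 : x * a₁ + y * b₁ = 0 := by simpa using congrArg Prod.fst hxy
    have e2 : x * a₂ + y * b₂ = 0 := by simpa using congrArg Prod.snd hxy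
    constructor
    · exact (mul_eq_zero.1 (by linear_combination b₂ * e1 - b₁ * e2 :
        (a₁ * b₂ - a₂ * b₁) * x = 0)).resolve_left hd
    · exact (mul_eq_zero.1 (by linear_combination a₁ * e2 - a₂ * e1 :
        (a₁ * b₂ - a₂ * b₁) * y = 0)).resolve_left hd

/-- A linear endomorphism of `ℝ⁴` that fixes the first coordinate and copies the second one to the
last is bijective iff the last two columns of `N` and `G`, which make up its middle
components with nonzero factors `p` and `r`, form a nonsingular `2 × 2` block. -/
theorem bijective_iff_block_det (L : (ℝ × ℝ × ℝ × ℝ) →L[ℝ] (ℝ × ℝ × ℝ × ℝ))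
    (N G : (ℝ × ℝ × ℝ × ℝ) →L[ℝ] ℝ) (p q r : ℝ) (hp : p ≠ 0) (hr : r ≠ 0)
    (hL : ∀ h, L h = (h.1, p * N h, q * h.2.1 + r * G h, h.2.1)) :
    Function.Bijective L ↔
      N (0, 0, 1, 0) * G (0, 0, 0, 1) - N (0, 0, 0, 1) * G (0, 0, 1, 0) ≠ 0 := by
  have split (F : (ℝ × ℝ × ℝ × ℝ) →L[ℝ] ℝ) (x y : ℝ) :
      F (0, 0, x, y) = x * F (0, 0, 1, 0) + y * F (0, 0, 0, 1) := by
    rw [← smul_eq_mul, ← smul_eq_mul, ← map_smul, ← map_smul, ← map_add]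
    simp
  have hinj : Function.Bijective L ↔ ∀ h, L h = 0 → h = 0 := by
    rw [← injective_iff_map_eq_zero L]
    exact ⟨fun h => h.1, fun h =>
      ⟨h, (LinearMap.injective_iff_surjective (f := L.toLinearMap)).1 h⟩⟩
  rw [hinj]
  constructor
  · intro h hd
    have key : ∀ x y : ℝ, N (0, 0, x, y) = 0 → G (0, 0, x, y) = 0 → x = 0 ∧ y = 0 := by
      intro x y h1 h2
      simpa using h (0, 0, x, y) (by rw [hL]; simp [h1, h2])
    -- The columns of the adjugate of a singular block lie in its kernel.
    have h1 := key (G (0, 0, 0, 1)) (-G (0, 0, 1, 0))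
      (by rw [split]; linarith) (by rw [split]; ring)
    have h2 := key (N (0, 0, 0, 1)) (-N (0, 0, 1, 0))
      (by rw [split]; ring) (by rw [split]; linarith)
    have h3 := key 1 0 (neg_eq_zero.1 h2.2) (neg_eq_zero.1 h1.2)
    exact one_ne_zero h3.1
  · rintro hd ⟨s, t, x, y⟩ h0
    rw [hL] at h0
    simp only [Prod.mk_eq_zero] at h0
    obtain ⟨rfl, hN, hG, rfl⟩ := h0
    have e1 := (mul_eq_zero.1 hN).resolve_left hp
    rw [mul_zero, zero_add] at hG
    have e2 := (mul_eq_zero.1 hG).resolve_left hr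
    rw [split] at e1 e2
    have hx := (mul_eq_zero.1 (by
      linear_combination G (0, 0, 0, 1) * e1 - N (0, 0, 0, 1) * e2 :
        (N (0, 0, 1, 0) * G (0, 0, 0, 1) - N (0, 0, 0, 1) * G (0, 0, 1, 0)) * x = 0)).resolve_left hd
    have hy := (mul_eq_zero.1 (by
      linear_combination N (0, 0, 1, 0) * e2 - G (0, 0, 1, 0) * e1 :
        (N (0, 0, 1, 0) * G (0, 0, 0, 1) - N (0, 0, 0, 1) * G (0, 0, 1, 0)) * y = 0)).resolve_left hd
    simp [hx, hy]

theorem hasDerivAt_norm_of_ne_zero {f : ℝ → EuclideanSpace ℝ (Fin 3)}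
    {f' : EuclideanSpace ℝ (Fin 3)} {t : ℝ} (hf : HasDerivAt f f' t) (h0 : f t ≠ 0) :
    HasDerivAt (fun x => ‖f x‖) ⟪‖f t‖⁻¹ • f t, f'⟫ t := by
  have hn : ‖f t‖ ≠ 0 := norm_ne_zero_iff.2 h0
  have h := hf.norm_sq.sqrt (pow_ne_zero 2 hn)
  simp only [Real.sqrt_sq (norm_nonneg _)] at h
  convert h using 1
  rw [real_inner_smul_left]
  field_simp

/-- For `τ₀ ≠ 0`, the Fréchet derivative of `P_L` at
`(s₀,τ₀,u₀,v₀)` is invertible iff the vectors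
`a = (⟨R̂, ∂ψ/∂u⟩, ⟨R̂, ∂ψ/∂v⟩)` and `b = (∂_u⟨R̂, γ'(s)⟩, ∂_v⟨R̂, γ'(s)⟩)`
at `(s₀,u₀,v₀)` are linearly independent. -/
theorem left_projection_nondegenerate_iff (c₀ : ℝ) (hc₀ : 0 < c₀)
    (ψ : ℝ × ℝ → EuclideanSpace ℝ (Fin 3)) (γ : ℝ → EuclideanSpace ℝ (Fin 3))
    (hψ : ContDiff ℝ (⊤ : ℕ∞) ψ) (hγ : ContDiff ℝ (⊤ : ℕ∞) γ)
    (hsep : ∀ u v s : ℝ, ψ (u, v) ≠ γ s)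
    (s₀ τ₀ u₀ v₀ : ℝ) (hτ₀ : τ₀ ≠ 0) :
    Function.Bijective (fderiv ℝ (PL c₀ ψ γ) (s₀, τ₀, u₀, v₀)) ↔
      LinearIndependent ℝ
        ![((⟪Rhat ψ γ u₀ v₀ s₀, deriv (fun u => ψ (u, v₀)) u₀⟫,
            ⟪Rhat ψ γ u₀ v₀ s₀, deriv (fun v => ψ (u₀, v)) v₀⟫) : ℝ × ℝ),
          ((deriv (fun u => ⟪Rhat ψ γ u v₀ s₀, deriv γ s₀⟫) u₀,
            deriv (fun v => ⟪Rhat ψ γ u₀ v s₀, deriv γ s₀⟫) v₀) : ℝ × ℝ)] := by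
  -- `N` is the range `‖R‖`, and `G` is the factor `⟨R̂, γ'⟩` of the Doppler component.
  set N : ℝ × ℝ × ℝ × ℝ → ℝ := fun x => ‖ψ (x.2.2.1, x.2.2.2) - γ x.1‖ with hNdef
  set G : ℝ × ℝ × ℝ × ℝ → ℝ :=
    fun x => ⟪Rhat ψ γ x.2.2.1 x.2.2.2 x.1, deriv γ x.1⟫ with hGdef
  have hψd : Differentiable ℝ ψ := hψ.differentiable (by simp)
  have hγd : Differentiable ℝ γ := hγ.differentiable (by simp)
  have hγ'd : Differentiable ℝ (deriv γ) :=
    ((contDiff_infty_iff_deriv.1 hγ).2).differentiable (by simp)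
  have hne (u v s : ℝ) : ψ (u, v) - γ s ≠ 0 := sub_ne_zero.2 (hsep u v s)
  have hR : Differentiable ℝ
      (fun x : ℝ × ℝ × ℝ × ℝ => ψ (x.2.2.1, x.2.2.2) - γ x.1) := by fun_prop
  have hNd : Differentiable ℝ N := fun x => (hR x).norm ℝ (hne _ _ _)
  have hGd : Differentiable ℝ G := by
    intro x
    have hRh : DifferentiableAt ℝ
        (fun x : ℝ × ℝ × ℝ × ℝ => Rhat ψ γ x.2.2.1 x.2.2.2 x.1) x :=
      ((hNd x).inv (norm_ne_zero_iff.2 (hne _ _ _))).smul (hR x)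
    exact hRh.inner ℝ (by fun_prop)
  set x₀ : ℝ × ℝ × ℝ × ℝ := (s₀, τ₀, u₀, v₀) with hx₀
  have hNf : HasFDerivAt N (fderiv ℝ N x₀) x₀ := (hNd x₀).hasFDerivAt
  have hGf : HasFDerivAt G (fderiv ℝ G x₀) x₀ := (hGd x₀).hasFDerivAt
  have hc : c₀ ≠ 0 := hc₀.ne'
  have hu : HasDerivAt (fun u : ℝ => ((s₀, τ₀, u, v₀) : ℝ × ℝ × ℝ × ℝ)) (0, 0, 1, 0) u₀ :=
    (hasDerivAt_const _ _).prodMk ((hasDerivAt_const _ _).prodMk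
      ((hasDerivAt_id _).prodMk (hasDerivAt_const _ _)))
  have hv : HasDerivAt (fun v : ℝ => ((s₀, τ₀, u₀, v) : ℝ × ℝ × ℝ × ℝ)) (0, 0, 0, 1) v₀ :=
    (hasDerivAt_const _ _).prodMk ((hasDerivAt_const _ _).prodMk
      ((hasDerivAt_const _ _).prodMk (hasDerivAt_id _)))
  have hψu : HasDerivAt (fun u => ψ (u, v₀) - γ s₀) (deriv (fun u => ψ (u, v₀)) u₀) u₀ :=
    (DifferentiableAt.hasDerivAt (by fun_prop)).sub_const _
  have hψv : HasDerivAt (fun v => ψ (u₀, v) - γ s₀) (deriv (fun v => ψ (u₀, v)) v₀) v₀ :=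
    (DifferentiableAt.hasDerivAt (by fun_prop)).sub_const _
  have hNu := hNf.comp_hasDerivAt u₀ hu
  have hNv := hNf.comp_hasDerivAt v₀ hv
  have hGu := hGf.comp_hasDerivAt u₀ hu
  have hGv := hGf.comp_hasDerivAt v₀ hv
  have a₁ : ⟪Rhat ψ γ u₀ v₀ s₀, deriv (fun u => ψ (u, v₀)) u₀⟫ = fderiv ℝ N x₀ (0, 0, 1, 0) :=
    (hasDerivAt_norm_of_ne_zero hψu (hne _ _ _)).unique hNu
  have a₂ : ⟪Rhat ψ γ u₀ v₀ s₀, deriv (fun v => ψ (u₀, v)) v₀⟫ = fderiv ℝ N x₀ (0, 0, 0, 1) :=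
    (hasDerivAt_norm_of_ne_zero hψv (hne _ _ _)).unique hNv
  have b₁ : deriv (fun u => ⟪Rhat ψ γ u v₀ s₀, deriv γ s₀⟫) u₀ = fderiv ℝ G x₀ (0, 0, 1, 0) :=
    hGu.deriv
  have b₂ : deriv (fun v => ⟪Rhat ψ γ u₀ v s₀, deriv γ s₀⟫) v₀ = fderiv ℝ G x₀ (0, 0, 0, 1) :=
    hGv.deriv
  rw [a₁, a₂, b₁, b₂, linearIndependent_pair_iff_det]
  refine bijective_iff_block_det _ _ _ (2 / c₀) (2 / c₀ * G x₀) (2 * τ₀ / c₀)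
    (by positivity) (by simp [hc, hτ₀]) fun h => ?_
  have hfst : HasFDerivAt (fun x : ℝ × ℝ × ℝ × ℝ => x.1)
      (ContinuousLinearMap.fst ℝ ℝ (ℝ × ℝ × ℝ)) x₀ := hasFDerivAt_fst
  have hτ : HasFDerivAt (fun x : ℝ × ℝ × ℝ × ℝ => x.2.1)
      ((ContinuousLinearMap.fst ℝ ℝ (ℝ × ℝ)).comp
        (ContinuousLinearMap.snd ℝ ℝ (ℝ × ℝ × ℝ))) x₀ :=
    hasFDerivAt_fst.comp x₀ hasFDerivAt_snd
  have hdop : HasFDerivAt (fun x : ℝ × ℝ × ℝ × ℝ => (2 * x.2.1 / c₀) * G x) _ x₀ :=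
    ((hτ.const_mul 2).mul_const c₀⁻¹).mul hGf
  have hPL : HasFDerivAt (PL c₀ ψ γ) _ x₀ :=
    hfst.prodMk ((hNf.const_mul (2 / c₀)).prodMk (hdop.prodMk hτ))
  rw [hPL.fderiv]
  simp only [ContinuousLinearMap.prod_apply, add_apply,
    smul_apply, ContinuousLinearMap.comp_apply,
    ContinuousLinearMap.coe_fst', ContinuousLinearMap.coe_snd', smul_eq_mul, Prod.mk.injEq,
    true_and, and_true]
  simp only [hx₀]
  ring
end

section
/- Define P_R : ℝ⁴ → ℝ⁴ by P_R(s,τ,u,v) = (u, v, −(2τ/c₀)·⟨R̂(u,v,s), ∂ψ/∂u(u,v)⟩, −(2τ/c₀)·⟨R̂(u,v,s), ∂ψ/∂v(u,v)⟩). Fix a point (s₀,τ₀,u₀,v₀) with τ₀ ≠ 0. Then the total derivative (Fréchet derivative) of P_R at (s₀,τ₀,u₀,v₀) is an invertible linear map if and only if the two vectors in ℝ², a = (⟨R̂, ∂ψ/∂u⟩, ⟨R̂, ∂ψ/∂v⟩) and ∂a/∂s = (∂/∂s ⟨R̂, ∂ψ/∂u⟩, ∂/∂s ⟨R̂, ∂ψ/∂v⟩),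 evaluated at (s₀,u₀,v₀), are linearly independent. -/
/-!
Write `F(s,u,v) = ⟨R̂, ∂ψ/∂u⟩` and `G(s,u,v) = ⟨R̂, ∂ψ/∂v⟩`. Both are differentiable, because `ψ`, `γ`
are smooth and `ψ - γ` never vanishes. With `k = -2/c₀ ≠ 0`, the map is
`P_R(s,τ,u,v) = (u, v, kτ F, kτ G)`, so its derivative is block triangular with an identity block in
the variables `(u,v)`. It is therefore invertible iff the remaining 2×2 block, with columns `kτ ∂ₛ(F,G)`
and `k (F,G)`, is invertible; as `k` and `τ` are nonzero, this is linear independence of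
`(F,G)` and `∂ₛ(F,G)`.
-/

open scoped RealInnerProductSpace

/-- The coordinate expression of the right projection of the canonical relation:
`P_R(s,τ,u,v) = (u, v, −(2τ/c₀)⟨R̂, ∂ψ/∂u⟩, −(2τ/c₀)⟨R̂, ∂ψ/∂v⟩)`. -/
noncomputable def PR (c₀ : ℝ) (ψ : ℝ × ℝ → EuclideanSpace ℝ (Fin 3))
    (γ : ℝ → EuclideanSpace ℝ (Fin 3)) (x : ℝ × ℝ × ℝ × ℝ) : ℝ × ℝ × ℝ × ℝ :=
  (x.2.2.1, x.2.2.2,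
    -((2 * x.2.1 / c₀) *
      ⟪Rhat ψ γ x.2.2.1 x.2.2.2 x.1, deriv (fun u => ψ (u, x.2.2.2)) x.2.2.1⟫),
    -((2 * x.2.1 / c₀) *
      ⟪Rhat ψ γ x.2.2.1 x.2.2.2 x.1, deriv (fun v => ψ (x.2.2.1, v)) x.2.2.2⟫))

/-- The abstract form of the theorem, for arbitrary differentiable `F`, `G` in the variables
`(s,u,v)`. -/
lemma bijective_fderiv_iff_linearIndependent {F G : ℝ × ℝ × ℝ → ℝ} {k s₀ τ₀ u₀ v₀ : ℝ}
    (hF : DifferentiableAt ℝ F (s₀, u₀, v₀)) (hG : DifferentiableAt ℝ G (s₀, u₀, v₀))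
    (hk : k ≠ 0) (hτ : τ₀ ≠ 0) :
    Function.Bijective (fderiv ℝ (fun x : ℝ × ℝ × ℝ × ℝ =>
      (x.2.2.1, x.2.2.2, (k * x.2.1) * F (x.1, x.2.2), (k * x.2.1) * G (x.1, x.2.2)))
        (s₀, τ₀, u₀, v₀)) ↔
      LinearIndependent ℝ ![((F (s₀, u₀, v₀), G (s₀, u₀, v₀)) : ℝ × ℝ),
        ((deriv (fun s => F (s, u₀, v₀)) s₀, deriv (fun s => G (s, u₀, v₀)) s₀) : ℝ × ℝ)] := by
  have partial_s : ∀ {H : ℝ × ℝ × ℝ → ℝ}, DifferentiableAt ℝ H (s₀, u₀, v₀) →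
      deriv (fun s => H (s, u₀, v₀)) s₀ = fderiv ℝ H (s₀, u₀, v₀) (1, 0, 0) := by
    intro H hH
    have h1 : HasDerivAt (fun s : ℝ => (s, u₀, v₀)) ((1 : ℝ), (0 : ℝ), (0 : ℝ)) s₀ :=
      (hasDerivAt_id s₀).prodMk (hasDerivAt_const s₀ (u₀, v₀))
    exact (hH.hasFDerivAt.comp_hasDerivAt s₀ h1).deriv
  -- On the kernel of `(du,dv)`, the derivative of `kτH` sees only `H` and `∂ₛH`.
  have third : ∀ {H : ℝ × ℝ × ℝ → ℝ}, DifferentiableAt ℝ H (s₀, u₀, v₀) →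
      ∃ L : ℝ × ℝ × ℝ × ℝ →L[ℝ] ℝ,
        HasFDerivAt (fun x : ℝ × ℝ × ℝ × ℝ => (k * x.2.1) * H (x.1, x.2.2)) L (s₀, τ₀, u₀, v₀) ∧
        ∀ a b, L (a, b, 0, 0) = k * (b * H (s₀, u₀, v₀) +
          (τ₀ * a) * deriv (fun s => H (s, u₀, v₀)) s₀) := by
    intro H hH
    have h1 : HasFDerivAt (fun x : ℝ × ℝ × ℝ × ℝ => (x.1, x.2.2))
        ((ContinuousLinearMap.fst ℝ ℝ (ℝ × ℝ × ℝ)).prod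
          ((ContinuousLinearMap.snd ℝ ℝ (ℝ × ℝ)).comp
            (ContinuousLinearMap.snd ℝ ℝ (ℝ × ℝ × ℝ)))) (s₀, τ₀, u₀, v₀) :=
      ContinuousLinearMap.hasFDerivAt
        ((ContinuousLinearMap.fst ℝ ℝ (ℝ × ℝ × ℝ)).prod
          ((ContinuousLinearMap.snd ℝ ℝ (ℝ × ℝ)).comp
            (ContinuousLinearMap.snd ℝ ℝ (ℝ × ℝ × ℝ))))
    have h2 : HasFDerivAt (fun x : ℝ × ℝ × ℝ × ℝ => k * x.2.1)
        (k • ((ContinuousLinearMap.fst ℝ ℝ (ℝ × ℝ)).comp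
            (ContinuousLinearMap.snd ℝ ℝ (ℝ × ℝ × ℝ)))) (s₀, τ₀, u₀, v₀) :=
      ContinuousLinearMap.hasFDerivAt
        (k • ((ContinuousLinearMap.fst ℝ ℝ (ℝ × ℝ)).comp
            (ContinuousLinearMap.snd ℝ ℝ (ℝ × ℝ × ℝ))))
    have h3 := HasFDerivAt.comp (s₀, τ₀, u₀, v₀) (f := fun x : ℝ × ℝ × ℝ × ℝ => (x.1, x.2.2))
      (g := H) hH.hasFDerivAt h1
    refine ⟨_, h2.mul h3, fun a b => ?_⟩
    have h4 : fderiv ℝ H (s₀, u₀, v₀) (a, 0, 0) = a * fderiv ℝ H (s₀, u₀, v₀) (1, 0, 0) := by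
      rw [← smul_eq_mul, ← map_smul]
      simp
    rw [partial_s hH]
    simp [h4]
    ring
  obtain ⟨L, hL, hLv⟩ := third hF
  obtain ⟨M, hM, hMv⟩ := third hG
  have h1 : HasFDerivAt (fun x : ℝ × ℝ × ℝ × ℝ => x.2.2.1)
      ((ContinuousLinearMap.fst ℝ ℝ ℝ).comp ((ContinuousLinearMap.snd ℝ ℝ (ℝ × ℝ)).comp
            (ContinuousLinearMap.snd ℝ ℝ (ℝ × ℝ × ℝ)))) (s₀, τ₀, u₀, v₀) :=
    ContinuousLinearMap.hasFDerivAt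
      ((ContinuousLinearMap.fst ℝ ℝ ℝ).comp ((ContinuousLinearMap.snd ℝ ℝ (ℝ × ℝ)).comp
            (ContinuousLinearMap.snd ℝ ℝ (ℝ × ℝ × ℝ))))
  have h2 : HasFDerivAt (fun x : ℝ × ℝ × ℝ × ℝ => x.2.2.2)
      ((ContinuousLinearMap.snd ℝ ℝ ℝ).comp ((ContinuousLinearMap.snd ℝ ℝ (ℝ × ℝ)).comp
            (ContinuousLinearMap.snd ℝ ℝ (ℝ × ℝ × ℝ)))) (s₀, τ₀, u₀, v₀) :=
    ContinuousLinearMap.hasFDerivAt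
      ((ContinuousLinearMap.snd ℝ ℝ ℝ).comp ((ContinuousLinearMap.snd ℝ ℝ (ℝ × ℝ)).comp
            (ContinuousLinearMap.snd ℝ ℝ (ℝ × ℝ × ℝ))))
  rw [(h1.prodMk (h2.prodMk (hL.prodMk hM))).fderiv, LinearIndependent.pair_iff]
  -- In finite dimension an injective endomorphism is bijective.
  have key : ∀ T : ℝ × ℝ × ℝ × ℝ →L[ℝ] ℝ × ℝ × ℝ × ℝ,
      Function.Bijective T ↔ ∀ x, T x = 0 → x = 0 := fun T => by
    rw [← injective_iff_map_eq_zero]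
    exact ⟨fun h => h.1, fun h =>
      ⟨h, (LinearMap.injective_iff_surjective (f := T.toLinearMap)).1 h⟩⟩
  rw [key]
  constructor
  · intro h a b hab
    simp only [Prod.smul_mk, Prod.mk_add_mk, smul_eq_mul, Prod.mk_eq_zero] at hab
    have e : τ₀ * (b / τ₀) = b := mul_div_cancel₀ b hτ
    have := h (b / τ₀, a, 0, 0) (by
      simp only [ContinuousLinearMap.prod_apply, hLv, hMv, e, hab.1, hab.2]
      simp)
    simpa [hτ, and_comm] using this
  · rintro h ⟨a, b, c, d⟩ hx
    simp only [ContinuousLinearMap.prod_apply, ContinuousLinearMap.comp_apply,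
      ContinuousLinearMap.coe_fst', ContinuousLinearMap.coe_snd', Prod.mk_eq_zero] at hx
    obtain ⟨rfl, rfl, hx1, hx2⟩ := hx
    rw [hLv] at hx1
    rw [hMv] at hx2
    have := h b (τ₀ * a) (by
      simp only [Prod.smul_mk, Prod.mk_add_mk, smul_eq_mul, Prod.mk_eq_zero]
      exact ⟨(mul_eq_zero.1 hx1).resolve_left hk, (mul_eq_zero.1 hx2).resolve_left hk⟩)
    simpa [hτ, and_comm] using this

/-- For `τ₀ ≠ 0`, the Fréchet derivative of `P_R` at
`(s₀,τ₀,u₀,v₀)` is invertible iff the vectors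
`a = (⟨R̂, ∂ψ/∂u⟩, ⟨R̂, ∂ψ/∂v⟩)` and `∂a/∂s` at `(s₀,u₀,v₀)`
are linearly independent. -/
theorem right_projection_nondegenerate_iff (c₀ : ℝ) (hc₀ : 0 < c₀)
    (ψ : ℝ × ℝ → EuclideanSpace ℝ (Fin 3)) (γ : ℝ → EuclideanSpace ℝ (Fin 3))
    (hψ : ContDiff ℝ (⊤ : ℕ∞) ψ) (hγ : ContDiff ℝ (⊤ : ℕ∞) γ)
    (hsep : ∀ u v s : ℝ, ψ (u, v) ≠ γ s)
    (s₀ τ₀ u₀ v₀ : ℝ) (hτ₀ : τ₀ ≠ 0) :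
    Function.Bijective (fderiv ℝ (PR c₀ ψ γ) (s₀, τ₀, u₀, v₀)) ↔
      LinearIndependent ℝ
        ![((⟪Rhat ψ γ u₀ v₀ s₀, deriv (fun u => ψ (u, v₀)) u₀⟫,
            ⟪Rhat ψ γ u₀ v₀ s₀, deriv (fun v => ψ (u₀, v)) v₀⟫) : ℝ × ℝ),
          ((deriv (fun s => ⟪Rhat ψ γ u₀ v₀ s, deriv (fun u => ψ (u, v₀)) u₀⟫) s₀,
            deriv (fun s => ⟪Rhat ψ γ u₀ v₀ s, deriv (fun v => ψ (u₀, v)) v₀⟫) s₀) : ℝ × ℝ)] := by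
  have hR : Differentiable ℝ (fun p : ℝ × ℝ × ℝ => Rhat ψ γ p.2.1 p.2.2 p.1) := by
    have h0 : Differentiable ℝ (fun p : ℝ × ℝ × ℝ => ψ (p.2.1, p.2.2) - γ p.1) := by
      have := hψ.differentiable (by simp)
      have := hγ.differentiable (by simp)
      fun_prop
    have hne : ∀ p : ℝ × ℝ × ℝ, ψ (p.2.1, p.2.2) - γ p.1 ≠ 0 := fun p =>
      sub_ne_zero.2 (hsep _ _ _)
    exact ((h0.norm ℝ hne).inv fun p => norm_ne_zero_iff.2 (hne p)).smul h0
  have hdψ : Differentiable ℝ (fderiv ℝ ψ) :=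
    (hψ.fderiv_right (m := 1) (by norm_cast)).differentiable (by simp)
  have eu : ∀ u v, deriv (fun u => ψ (u, v)) u = fderiv ℝ ψ (u, v) (1, 0) := fun u v =>
    ((hψ.differentiable (by simp) (u, v)).hasFDerivAt.comp_hasDerivAt u
      ((hasDerivAt_id u).prodMk (hasDerivAt_const u v))).deriv
  have ev : ∀ u v, deriv (fun v => ψ (u, v)) v = fderiv ℝ ψ (u, v) (0, 1) := fun u v =>
    ((hψ.differentiable (by simp) (u, v)).hasFDerivAt.comp_hasDerivAt v
      ((hasDerivAt_const v u).prodMk (hasDerivAt_id v))).deriv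
  have hdir : ∀ w : ℝ × ℝ, Differentiable ℝ (fun p : ℝ × ℝ × ℝ =>
      ⟪Rhat ψ γ p.2.1 p.2.2 p.1, fderiv ℝ ψ (p.2.1, p.2.2) w⟫) := fun w =>
    hR.inner ℝ (by fun_prop)
  have hPR : PR c₀ ψ γ = fun x : ℝ × ℝ × ℝ × ℝ =>
      (x.2.2.1, x.2.2.2,
        (-(2 / c₀) * x.2.1) *
          ⟪Rhat ψ γ x.2.2.1 x.2.2.2 x.1, fderiv ℝ ψ (x.2.2.1, x.2.2.2) (1, 0)⟫,
        (-(2 / c₀) * x.2.1) *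
          ⟪Rhat ψ γ x.2.2.1 x.2.2.2 x.1, fderiv ℝ ψ (x.2.2.1, x.2.2.2) (0, 1)⟫) := by
    funext x
    simp only [PR, eu, ev, Prod.mk.injEq, true_and]
    constructor <;> ring
  simp only [hPR, eu, ev]
  exact bijective_fderiv_iff_linearIndependent (hdir (1, 0) _) (hdir (0, 1) _)
    (neg_ne_zero.2 (div_ne_zero two_ne_zero hc₀.ne')) hτ₀
end

section
/- Let ψ(u,v) = (u,v,0) (flat topography) and γ(s) = (s,0,h) with h > 0 (straight horizontal flight path). Then at every (s,u,v) ∈ ℝ³: (i) the vectors a = (⟨R̂, ∂ψ/∂u⟩, ⟨R̂, ∂ψ/∂v⟩) and b = (∂/∂u ⟨R̂, γ'(s)⟩, ∂/∂v ⟨R̂, γ'(s)⟩) in ℝ² are linearly dependent if and only if v = 0; and (ii) the vectors a and ∂a/∂s = (∂/∂s ⟨R̂, ∂ψ/∂u⟩, ∂/∂s ⟨R̂, ∂ψ/∂v⟩) are linearly dependent if and only if v = 0. That is, the degenerate set of the canonical relation lies exactly over the points directly under the flight path. -/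
/-!
Write `x = u - s` and `r = √(x² + v² + h²)`, which is positive because `h > 0`. Then
`R̂ = (x, v, -h) / r`, `∂ψ/∂u = γ' = e₁` and `∂ψ/∂v = e₂`, so that
`a = (x/r, v/r)` and `b = ((v² + h²)/r³, -x v/r³)`. Here `a` is the gradient of `r` in
`(u, v)` and depends on `u`, `s` only through `u - s`, while `⟨R̂, γ'⟩ = ∂r/∂u`; so the symmetry
of mixed derivatives gives `∂a/∂s = -b`. Two vectors of the plane are dependent exactly when
their determinant vanishes, and `det (a, b) = -v (x² + v² + h²)/r⁴ = -v/r²`, which vanishes exactly for `v = 0`.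
-/

open scoped RealInnerProductSpace

/-- The vector `a = (⟨R̂, ∂ψ/∂u⟩, ⟨R̂, ∂ψ/∂v⟩)` at `(s,u,v)`. -/
noncomputable def aVec (ψ : ℝ × ℝ → EuclideanSpace ℝ (Fin 3))
    (γ : ℝ → EuclideanSpace ℝ (Fin 3)) (s u v : ℝ) : ℝ × ℝ :=
  (⟪Rhat ψ γ u v s, deriv (fun u' => ψ (u', v)) u⟫,
   ⟪Rhat ψ γ u v s, deriv (fun v' => ψ (u, v')) v⟫)

/-- The vector `b = (∂_u⟨R̂, γ'(s)⟩, ∂_v⟨R̂, γ'(s)⟩)` at `(s,u,v)`. -/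
noncomputable def bVec (ψ : ℝ × ℝ → EuclideanSpace ℝ (Fin 3))
    (γ : ℝ → EuclideanSpace ℝ (Fin 3)) (s u v : ℝ) : ℝ × ℝ :=
  (deriv (fun u' => ⟪Rhat ψ γ u' v s, deriv γ s⟫) u,
   deriv (fun v' => ⟪Rhat ψ γ u v' s, deriv γ s⟫) v)

/-- The vector `∂a/∂s = (∂_s⟨R̂, ∂ψ/∂u⟩, ∂_s⟨R̂, ∂ψ/∂v⟩)` at `(s,u,v)`. -/
noncomputable def daVecds (ψ : ℝ × ℝ → EuclideanSpace ℝ (Fin 3))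
    (γ : ℝ → EuclideanSpace ℝ (Fin 3)) (s u v : ℝ) : ℝ × ℝ :=
  (deriv (fun s' => ⟪Rhat ψ γ u v s', deriv (fun u' => ψ (u', v)) u⟫) s,
   deriv (fun s' => ⟪Rhat ψ γ u v s', deriv (fun v' => ψ (u, v')) v⟫) s)

/-- The flat topography `ψ(u,v) = (u, v, 0)`. -/
noncomputable def ψflat : ℝ × ℝ → EuclideanSpace ℝ (Fin 3) :=
  fun p => (WithLp.equiv 2 (Fin 3 → ℝ)).symm ![p.1, p.2, 0]

/-- The straight horizontal flight path `γ(s) = (s, 0, h)`. -/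
noncomputable def γflat (h : ℝ) : ℝ → EuclideanSpace ℝ (Fin 3) :=
  fun s => (WithLp.equiv 2 (Fin 3 → ℝ)).symm ![s, 0, h]

/-- Two vectors of the plane are linearly dependent iff their determinant vanishes. -/
lemma not_linearIndependent_pair_iff_det (p q : ℝ × ℝ) :
    ¬ LinearIndependent ℝ ![p, q] ↔ p.1 * q.2 - p.2 * q.1 = 0 := by
  obtain ⟨a, b⟩ := p
  obtain ⟨c, d⟩ := q
  rw [LinearIndependent.pair_iff]
  simp only [Prod.smul_mk, Prod.mk_add_mk, smul_eq_mul, Prod.mk_eq_zero]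
  constructor
  · intro H
    by_contra hD
    refine H fun x y ⟨h1, h2⟩ => ⟨?_, ?_⟩
    · exact (mul_eq_zero.mp (show x * (a * d - b * c) = 0 by
        linear_combination d * h1 - c * h2)).resolve_right hD
    · exact (mul_eq_zero.mp (show y * (a * d - b * c) = 0 by
        linear_combination a * h2 - b * h1)).resolve_right hD
  · intro hD H
    -- The vanishing determinant makes `d • p - b • q` and `c • p - a • q` zero. Independence then
    -- forces all entries to vanish, which makes `1 • p + 0 • q = 0` a contradiction.
    have h1 := H d (-b) ⟨by linear_combination hD, by ring⟩
    have h2 := H c (-a) ⟨by ring, by linear_combination -hD⟩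
    have h3 := H 1 0 ⟨by linarith [h2.2], by linarith [h1.2]⟩
    exact one_ne_zero h3.1

/-- A curve in `ℝ³` may be differentiated coordinate by coordinate. -/
lemma hasDerivAt_of_coord {f : ℝ → EuclideanSpace ℝ (Fin 3)} {f' : EuclideanSpace ℝ (Fin 3)}
    {t : ℝ} (H : ∀ i, HasDerivAt (fun t => f t i) (f' i) t) : HasDerivAt f f' t := by
  rw [hasDerivAt_iff_hasFDerivAt, ← hasFDerivWithinAt_univ, hasFDerivWithinAt_euclidean]
  intro i
  have hL : PiLp.proj 2 (fun _ => ℝ) i ∘L ContinuousLinearMap.toSpanSingleton ℝ f' =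
      ContinuousLinearMap.toSpanSingleton ℝ (f' i) := by
    ext
    simp
  exact hL ▸ (H i).hasFDerivAt.hasFDerivWithinAt

lemma deriv_ψflat_fst (u v : ℝ) :
    deriv (fun u' => ψflat (u', v)) u = EuclideanSpace.single 0 1 := by
  refine HasDerivAt.deriv ?_
  refine hasDerivAt_of_coord ?_
  intro i
  fin_cases i
  · simpa [ψflat] using hasDerivAt_id' u
  · simpa [ψflat] using hasDerivAt_const u v
  · simpa [ψflat] using hasDerivAt_const u (0 : ℝ)

lemma deriv_ψflat_snd (u v : ℝ) :
    deriv (fun v' => ψflat (u, v')) v = EuclideanSpace.single 1 1 := by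
  refine HasDerivAt.deriv ?_
  refine hasDerivAt_of_coord ?_
  intro i
  fin_cases i
  · simpa [ψflat] using hasDerivAt_const v u
  · simpa [ψflat] using hasDerivAt_id' v
  · simpa [ψflat] using hasDerivAt_const v (0 : ℝ)

lemma deriv_γflat (h s : ℝ) : deriv (γflat h) s = EuclideanSpace.single 0 1 := by
  refine HasDerivAt.deriv ?_
  refine hasDerivAt_of_coord ?_
  intro i
  fin_cases i
  · simpa [γflat] using hasDerivAt_id' s
  · simpa [γflat] using hasDerivAt_const s (0 : ℝ)
  · simpa [γflat] using hasDerivAt_const s h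

lemma norm_ψflat_sub_γflat (h s u v : ℝ) :
    ‖ψflat (u, v) - γflat h s‖ = √((u - s) ^ 2 + v ^ 2 + h ^ 2) := by
  simp [EuclideanSpace.norm_eq, Fin.sum_univ_three, ψflat, γflat]

lemma inner_Rhat_zero (h s u v : ℝ) :
    ⟪Rhat ψflat (γflat h) u v s, EuclideanSpace.single 0 1⟫ =
      (u - s) / √((u - s) ^ 2 + v ^ 2 + h ^ 2) := by
  rw [Rhat, norm_ψflat_sub_γflat, EuclideanSpace.inner_single_right]
  simp [ψflat, γflat, div_eq_inv_mul]

lemma inner_Rhat_one (h s u v : ℝ) :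
    ⟪Rhat ψflat (γflat h) u v s, EuclideanSpace.single 1 1⟫ =
      v / √((u - s) ^ 2 + v ^ 2 + h ^ 2) := by
  rw [Rhat, norm_ψflat_sub_γflat, EuclideanSpace.inner_single_right]
  simp [ψflat, γflat, div_eq_inv_mul]

/-- The quotient rule for `f / √g`, with the result over the common denominator `(√g)³`. -/
lemma deriv_div_sqrt {f g : ℝ → ℝ} {f' g' t : ℝ} (hf : HasDerivAt f f' t)
    (hg : HasDerivAt g g' t) (hpos : 0 < g t) :
    deriv (fun t => f t / √(g t)) t = (f' * g t - f t * g' / 2) / √(g t) ^ 3 := by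
  have hr : √(g t) ≠ 0 := (Real.sqrt_pos.mpr hpos).ne'
  rw [(hf.fun_div (hg.sqrt hpos.ne') hr).deriv]
  have hsq : √(g t) ^ 2 = g t := Real.sq_sqrt hpos.le
  field_simp
  rw [hsq]
  ring

/-- For the flat topography and straight horizontal flight
path at altitude `h > 0`: at every `(s,u,v)`, (i) `a` and `b` are linearly
dependent iff `v = 0`, and (ii) `a` and `∂a/∂s` are linearly dependent iff
`v = 0`: the degenerate set lies exactly over points directly under the
flight path. -/
theorem flat_degenerate_set_under_flight_path (h : ℝ) (hh : 0 < h) :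
    ∀ s u v : ℝ,
      (¬ LinearIndependent ℝ
          ![aVec ψflat (γflat h) s u v, bVec ψflat (γflat h) s u v] ↔ v = 0) ∧
      (¬ LinearIndependent ℝ
          ![aVec ψflat (γflat h) s u v, daVecds ψflat (γflat h) s u v] ↔ v = 0) := by
  intro s u v
  have hpos : 0 < (u - s) ^ 2 + v ^ 2 + h ^ 2 := by positivity
  have hr : √((u - s) ^ 2 + v ^ 2 + h ^ 2) ≠ 0 := (Real.sqrt_pos.mpr hpos).ne'
  -- The derivatives of `x` and of `r² = x² + v² + h²` in each of the three variables.
  have xu : HasDerivAt (fun u' : ℝ => u' - s) 1 u := (hasDerivAt_id u).sub_const s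
  have xs : HasDerivAt (fun s' : ℝ => u - s') (-1) s := (hasDerivAt_id s).const_sub u
  have gu : HasDerivAt (fun u' : ℝ => (u' - s) ^ 2 + v ^ 2 + h ^ 2) (2 * (u - s)) u := by
    simpa using ((xu.pow 2).add_const (v ^ 2)).add_const (h ^ 2)
  have gv : HasDerivAt (fun v' : ℝ => (u - s) ^ 2 + v' ^ 2 + h ^ 2) (2 * v) v := by
    simpa using (((hasDerivAt_id v).pow 2).const_add ((u - s) ^ 2)).add_const (h ^ 2)
  have gs : HasDerivAt (fun s' : ℝ => (u - s') ^ 2 + v ^ 2 + h ^ 2) (-(2 * (u - s))) s := by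
    simpa using ((xs.pow 2).add_const (v ^ 2)).add_const (h ^ 2)
  have hb1 := deriv_div_sqrt xu gu hpos
  have hb2 := deriv_div_sqrt (hasDerivAt_const v (u - s)) gv hpos
  have hd1 := deriv_div_sqrt xs gs hpos
  have hd2 := deriv_div_sqrt (hasDerivAt_const s v) gs hpos
  constructor
  · rw [not_linearIndependent_pair_iff_det]
    simp only [aVec, bVec, deriv_ψflat_fst, deriv_ψflat_snd, deriv_γflat, inner_Rhat_zero,
      inner_Rhat_one]
    rw [hb1, hb2]
    -- With `G` standing for `r²`, the determinant is `-v` times the nonzero factor `G / r⁴`.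
    rw [show ∀ r G x : ℝ, x / r * ((0 * G - x * (2 * v) / 2) / r ^ 3)
        - v / r * ((1 * G - x * (2 * x) / 2) / r ^ 3) = -v * (G / r ^ 4) by intros; ring]
    simp [hpos.ne', hr]
  · rw [not_linearIndependent_pair_iff_det]
    simp only [aVec, daVecds, deriv_ψflat_fst, deriv_ψflat_snd, inner_Rhat_zero,
      inner_Rhat_one]
    rw [hd1, hd2]
    rw [show ∀ r G x : ℝ, x / r * ((0 * G - v * -(2 * x) / 2) / r ^ 3)
        - v / r * ((-1 * G - x * -(2 * x) / 2) / r ^ 3) = v * (G / r ^ 4) by intros; ring]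
    simp [hpos.ne', hr]
end

section
/- Define P_L : ℝ⁴ → ℝ⁴ by P_L(s,τ,u,v) = (s, (2/c₀)·‖R(u,v,s)‖, (2τ/c₀)·⟨R̂(u,v,s), γ'(s)⟩, τ). Let x₀ = (s₀,τ₀,u₀,v₀) with τ₀ ≠ 0, and suppose the vectors a = (⟨R̂, ∂ψ/∂u⟩, ⟨R̂, ∂ψ/∂v⟩) and b = (∂/∂u ⟨R̂, γ'(s)⟩, ∂/∂v ⟨R̂, γ'(s)⟩), evaluated at (s₀,u₀,v₀), are linearly independent (i.e., x₀ is a non-degenerate point). Then x₀ is an isolated point of the fiber P_L⁻¹({P_L(x₀)}): there is an open neighborhood U of x₀ such that P_L(x) ≠ P_L(x₀) for every x ∈ U with x ≠ x₀. In other words, non-degenerate mirror points are isolated. -/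
/-!
Equality of `PL x` and `PL x₀` forces `s = s₀` and `τ = τ₀`, and since `τ₀ ≠ 0` and `c₀ ≠ 0` it
also forces `G (u, v) = G (u₀, v₀)` for the planar map `G = (‖R‖, ⟪R̂, γ'⟫)` at the fixed time `s₀`.
The gradient of `‖R‖` is `a` (`hasDerivAt_norm_sub`) and that of `⟪R̂, γ'⟫` is `b`, so the Jacobian
determinant of `G` at `(u₀, v₀)` is nonzero. A map with injective derivative at a point of a
finite-dimensional space takes its value there at no other nearby point
(`eventually_ne_of_linearIndependent`); no inverse function theorem is needed.
-/

open scoped RealInnerProductSpace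

open Filter Topology

/-- Two real functions on the plane whose gradients at `p` are linearly independent do not
simultaneously take their values at `p` anywhere else near `p`. -/
lemma eventually_ne_of_linearIndependent {N H : ℝ × ℝ → ℝ} {p : ℝ × ℝ}
    (hN : DifferentiableAt ℝ N p) (hH : DifferentiableAt ℝ H p)
    (hind : LinearIndependent ℝ
      ![((deriv (fun u => N (u, p.2)) p.1, deriv (fun v => N (p.1, v)) p.2) : ℝ × ℝ),
        ((deriv (fun u => H (u, p.2)) p.1, deriv (fun v => H (p.1, v)) p.2) : ℝ × ℝ)]) :
    ∀ᶠ z in 𝓝[≠] p, (N z, H z) ≠ (N p, H p) := by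
  have partials : ∀ {F : ℝ × ℝ → ℝ}, DifferentiableAt ℝ F p → ∀ z : ℝ × ℝ,
      fderiv ℝ F p z = z.1 * deriv (fun u => F (u, p.2)) p.1
        + z.2 * deriv (fun v => F (p.1, v)) p.2 := by
    intro F hF z
    have h1 : HasDerivAt (fun u => F (u, p.2)) (fderiv ℝ F p (1, 0)) p.1 :=
      HasFDerivAt.comp_hasDerivAt (f := fun u : ℝ => (u, p.2)) p.1 hF.hasFDerivAt
        ((hasDerivAt_id p.1).prodMk (hasDerivAt_const p.1 p.2))
    have h2 : HasDerivAt (fun v => F (p.1, v)) (fderiv ℝ F p (0, 1)) p.2 :=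
      HasFDerivAt.comp_hasDerivAt (f := fun v : ℝ => (p.1, v)) p.2 hF.hasFDerivAt
        ((hasDerivAt_const p.2 p.1).prodMk (hasDerivAt_id p.2))
    rw [h1.deriv, h2.deriv, ← smul_eq_mul, ← smul_eq_mul, ← map_smul, ← map_smul, ← map_add]
    simp
  have hNp := partials hN
  have hHp := partials hH
  generalize deriv (fun u => N (u, p.2)) p.1 = a₁ at *
  generalize deriv (fun v => N (p.1, v)) p.2 = a₂ at *
  generalize deriv (fun u => H (u, p.2)) p.1 = b₁ at *
  generalize deriv (fun v => H (p.1, v)) p.2 = b₂ at *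
  rw [LinearIndependent.pair_iff] at hind
  have hdet : a₁ * b₂ - a₂ * b₁ ≠ 0 := by
    intro h0
    -- If the determinant vanishes, then `b₂ • a - a₂ • b = 0 = b₁ • a - a₁ • b`, which forces `a = 0`.
    obtain ⟨hb2, ha2⟩ := hind b₂ (-a₂) (by ext <;> simp <;> linarith)
    obtain ⟨hb1, ha1⟩ := hind b₁ (-a₁) (by ext <;> simp <;> linarith)
    obtain ⟨h, -⟩ := hind 1 0 (by
      ext <;> simp <;> linarith)
    exact one_ne_zero h
  refine (hN.hasFDerivAt.prodMk hH.hasFDerivAt).eventually_ne ?_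
  have hker : LinearMap.ker ((fderiv ℝ N p).prod (fderiv ℝ H p)).toLinearMap = ⊥ := by
    rw [LinearMap.ker_eq_bot']
    intro z hz
    have hz' : (fderiv ℝ N p z, fderiv ℝ H p z) = (0, 0) := hz
    rw [Prod.mk.injEq, hNp, hHp] at hz'
    obtain ⟨e1, e2⟩ := hz'
    ext
    · refine (mul_eq_zero.1 ?_).resolve_right hdet
      linear_combination b₂ * e1 - a₂ * e2
    · refine (mul_eq_zero.1 ?_).resolve_right hdet
      linear_combination a₁ * e2 - b₁ * e1
  obtain ⟨K, -, hK⟩ := LinearMap.exists_antilipschitzWith _ hker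
  exact ⟨K, hK⟩

/-- The derivative of the distance from a fixed point along a curve is the radial component of
the velocity. -/
lemma hasDerivAt_norm_sub {f : ℝ → EuclideanSpace ℝ (Fin 3)} {c : EuclideanSpace ℝ (Fin 3)}
    {t : ℝ} (hf : DifferentiableAt ℝ f t) (h : f t ≠ c) :
    HasDerivAt (fun x => ‖f x - c‖) ⟪‖f t - c‖⁻¹ • (f t - c), deriv f t⟫ t := by
  have hpos : ‖f t - c‖ ≠ 0 := norm_ne_zero_iff.2 (sub_ne_zero.2 h)
  have h1 := ((hf.hasDerivAt.sub_const c).norm_sq).sqrt (pow_ne_zero 2 hpos)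
  simp only [Real.sqrt_sq (norm_nonneg _)] at h1
  convert h1 using 1
  rw [real_inner_smul_left]
  field_simp

/-- If at `x₀ = (s₀,τ₀,u₀,v₀)` (with `τ₀ ≠ 0`) the vectors
`a = (⟨R̂, ∂ψ/∂u⟩, ⟨R̂, ∂ψ/∂v⟩)` and `b = (∂_u⟨R̂, γ'⟩, ∂_v⟨R̂, γ'⟩)` are
linearly independent, then `x₀` is an isolated point of the fiber
`P_L⁻¹({P_L(x₀)})`: non-degenerate mirror points are isolated. -/
theorem nondegenerate_mirror_points_isolated (c₀ : ℝ) (hc₀ : 0 < c₀)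
    (ψ : ℝ × ℝ → EuclideanSpace ℝ (Fin 3)) (γ : ℝ → EuclideanSpace ℝ (Fin 3))
    (hψ : ContDiff ℝ (⊤ : ℕ∞) ψ) (hγ : ContDiff ℝ (⊤ : ℕ∞) γ)
    (hsep : ∀ u v s : ℝ, ψ (u, v) ≠ γ s)
    (s₀ τ₀ u₀ v₀ : ℝ) (hτ₀ : τ₀ ≠ 0)
    (hindep : LinearIndependent ℝ
      ![((⟪Rhat ψ γ u₀ v₀ s₀, deriv (fun u => ψ (u, v₀)) u₀⟫,
          ⟪Rhat ψ γ u₀ v₀ s₀, deriv (fun v => ψ (u₀, v)) v₀⟫) : ℝ × ℝ),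
        ((deriv (fun u => ⟪Rhat ψ γ u v₀ s₀, deriv γ s₀⟫) u₀,
          deriv (fun v => ⟪Rhat ψ γ u₀ v s₀, deriv γ s₀⟫) v₀) : ℝ × ℝ)]) :
    ∃ U : Set (ℝ × ℝ × ℝ × ℝ), IsOpen U ∧ (s₀, τ₀, u₀, v₀) ∈ U ∧
      ∀ x ∈ U, x ≠ (s₀, τ₀, u₀, v₀) →
        PL c₀ ψ γ x ≠ PL c₀ ψ γ (s₀, τ₀, u₀, v₀) := by
  have hψd : Differentiable ℝ ψ := hψ.differentiable (by simp)
  have hR : DifferentiableAt ℝ (fun p : ℝ × ℝ => ψ p - γ s₀) (u₀, v₀) :=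
    (hψd _).sub_const _
  have hR0 : ψ (u₀, v₀) - γ s₀ ≠ 0 := sub_ne_zero.2 (hsep _ _ _)
  have hN : DifferentiableAt ℝ (fun p : ℝ × ℝ => ‖ψ p - γ s₀‖) (u₀, v₀) := hR.norm ℝ hR0
  have hH : DifferentiableAt ℝ
      (fun p : ℝ × ℝ => ⟪Rhat ψ γ p.1 p.2 s₀, deriv γ s₀⟫) (u₀, v₀) :=
    ((hN.inv (norm_ne_zero_iff.2 hR0)).smul hR).inner ℝ (differentiableAt_const _)
  have hu := (hasDerivAt_norm_sub (f := fun u => ψ (u, v₀)) (c := γ s₀) (t := u₀)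
    (by fun_prop) (hsep _ _ _)).deriv
  have hv := (hasDerivAt_norm_sub (f := fun v => ψ (u₀, v)) (c := γ s₀) (t := v₀)
    (by fun_prop) (hsep _ _ _)).deriv
  have key := eventually_ne_of_linearIndependent hN hH (by
    simp only [hu, hv]
    exact hindep)
  rw [eventually_nhdsWithin_iff, eventually_nhds_iff] at key
  obtain ⟨V, hV, hVo, hmem⟩ := key
  refine ⟨(fun x : ℝ × ℝ × ℝ × ℝ => x.2.2) ⁻¹' V, hVo.preimage (by fun_prop), hmem, ?_⟩
  rintro ⟨s, τ, u, v⟩ hx hne heq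
  simp only [PL, Prod.mk.injEq] at heq
  obtain ⟨rfl, h1, h2, rfl⟩ := heq
  refine hV (u, v) hx (fun h => hne (by rw [Set.mem_singleton_iff.1 h])) ?_
  exact Prod.ext (mul_left_cancel₀ (by positivity) h1) (mul_left_cancel₀ (by positivity) h2)
end

section
/- Let ψ(u,v) = (cos u, v, 1 − sin u) and γ(s) = (0, s, 1). Then ⟨R̂(u,v,s), ∂ψ/∂u(u,v)⟩ = 0 for all (u,v,s) ∈ ℝ³. Consequently, the vector a = (⟨R̂, ∂ψ/∂u⟩, ⟨R̂, ∂ψ/∂v⟩) ∈ ℝ² and its partial derivative ∂a/∂s are linearly dependent at every point, i.e., every point satisfies the degeneracy condition for the right projection of the canonical relation (all mirror points are degenerate). -/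
/-!
The circle `u ↦ ψ(u, v)` is centred at the point `(0, v, 1)` of the axis traced by `γ`. So
`ψ(u,v) − γ(s) = (cos u, v − s, −sin u)` is a radial vector plus an axial one, both orthogonal
to the tangent `∂ψ/∂u = (−sin u, 0, −cos u)` of the circle (`inner_Rhat_deriv_left`). The first
component of `a` thus vanishes identically in `s`, hence so does the first component of `∂a/∂s`;
two vectors of the line `{0} × ℝ` are linearly dependent (`not_linearIndependent_of_fst_eq_zero`).
-/

open scoped RealInnerProductSpace

/-- The cylindrical topography `ψ(u,v) = (cos u, v, 1 − sin u)`. -/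
noncomputable def ψcyl : ℝ × ℝ → EuclideanSpace ℝ (Fin 3) :=
  fun p => (WithLp.equiv 2 (Fin 3 → ℝ)).symm ![Real.cos p.1, p.2, 1 - Real.sin p.1]

/-- The flight path `γ(s) = (0, s, 1)` along the cylinder's axis. -/
noncomputable def γcyl : ℝ → EuclideanSpace ℝ (Fin 3) :=
  fun s => (WithLp.equiv 2 (Fin 3 → ℝ)).symm ![0, s, 1]

theorem hasDerivAt_ψcyl_left (u v : ℝ) :
    HasDerivAt (fun u' => ψcyl (u', v)) (!₂[-Real.sin u, 0, -Real.cos u]) u := by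
  have h : HasDerivAt (fun u' : ℝ => (![Real.cos u', v, 1 - Real.sin u'] : Fin 3 → ℝ))
      ![-Real.sin u, 0, -Real.cos u] u := by
    rw [hasDerivAt_pi]
    intro i
    fin_cases i
    · exact Real.hasDerivAt_cos u
    · exact hasDerivAt_const u v
    · exact (Real.hasDerivAt_sin u).const_sub 1
  exact (EuclideanSpace.equiv (Fin 3) ℝ).symm.hasFDerivAt.comp_hasDerivAt u h

theorem inner_Rhat_deriv_left (u v s : ℝ) :
    ⟪Rhat ψcyl γcyl u v s, deriv (fun u' => ψcyl (u', v)) u⟫ = 0 := by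
  rw [(hasDerivAt_ψcyl_left u v).deriv, Rhat, real_inner_smul_left]
  refine mul_eq_zero_of_right _ ?_
  simp [ψcyl, γcyl, PiLp.inner_apply, Fin.sum_univ_three]
  ring

/-- Two vectors of the line `{0} × ℝ` are linearly dependent. -/
theorem not_linearIndependent_of_fst_eq_zero {x y : ℝ × ℝ} (hx : x.1 = 0) (hy : y.1 = 0) :
    ¬ LinearIndependent ℝ ![x, y] := by
  intro h
  have hx0 : x ≠ 0 := h.ne_zero 0
  rw [LinearIndependent.pair_iff] at h
  -- The relation `y₂ x − x₂ y = 0` forces `x₂ = 0`.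
  have h2 := (h y.2 (-x.2) (by ext <;> simp [hx, hy, mul_comm])).2
  exact hx0 (Prod.ext hx (neg_eq_zero.mp h2))

/-- For the cylinder with axial flight path,
`⟨R̂(u,v,s), ∂ψ/∂u(u,v)⟩ = 0` everywhere; consequently `a` and `∂a/∂s` are
linearly dependent at every point: every point satisfies the degeneracy
condition for the right projection (all mirror points are degenerate). -/
theorem cylinder_all_points_degenerate :
    ∀ u v s : ℝ,
      ⟪Rhat ψcyl γcyl u v s, deriv (fun u' => ψcyl (u', v)) u⟫ = 0 ∧
      ¬ LinearIndependent ℝ ![aVec ψcyl γcyl s u v, daVecds ψcyl γcyl s u v] := by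
  intro u v s
  refine ⟨inner_Rhat_deriv_left u v s,
    not_linearIndependent_of_fst_eq_zero (inner_Rhat_deriv_left u v s) ?_⟩
  simp only [daVecds, inner_Rhat_deriv_left, deriv_const]
end

section
/- Let ψ(u,v) = (cos u, v, 1 − sin u) and γ(s) = (0, s, 1), and let c₀ > 0. Fix s ∈ ℝ and t > 2/c₀, and set α(t) = √(c₀²t²/4 − 1). Then {(u,v) ∈ (0,π) × ℝ : (2/c₀)·‖ψ(u,v) − γ(s)‖ = t} = (0,π) × {s − α(t), s + α(t)}. In particular, this set of mirror points is infinite. -/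
/-!
Since the flight path is the axis of the cylinder, `ψ(u,v) - γ(s) = (cos u, v - s, -sin u)` has
squared norm `1 + (v - s)²`, independent of `u`. As `c₀ t / 2 > 0`, the travel-time equation is
therefore `(v - s)² = c₀² t² / 4 - 1`, whose right-hand side is positive because `t > 2 / c₀`, so
that `v = s ± α(t)` with `u ∈ (0, π)` arbitrary.
-/

open Real

lemma norm_ψcyl_sub_γcyl (p : ℝ × ℝ) (s : ℝ) :
    ‖ψcyl p - γcyl s‖ = Real.sqrt (1 + (p.2 - s) ^ 2) := by
  rw [EuclideanSpace.norm_eq]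
  congr 1
  simp only [Fin.sum_univ_three, Real.norm_eq_abs, sq_abs]
  simp [ψcyl, γcyl]
  linarith [Real.sin_sq_add_cos_sq p.1]

/-- The travel-time equation constrains only the axial coordinate. -/
lemma travel_time_iff (c₀ : ℝ) (hc₀ : 0 < c₀) (s t : ℝ) (ht : 2 / c₀ < t) (p : ℝ × ℝ) :
    (2 / c₀) * ‖ψcyl p - γcyl s‖ = t ↔
      p.2 = s - Real.sqrt (c₀ ^ 2 * t ^ 2 / 4 - 1) ∨
      p.2 = s + Real.sqrt (c₀ ^ 2 * t ^ 2 / 4 - 1) := by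
  have h2 : 2 < c₀ * t := by
    rw [div_lt_iff₀ hc₀] at ht
    linarith
  have hα : 0 ≤ c₀ ^ 2 * t ^ 2 / 4 - 1 := by nlinarith
  have hsolve : (2 / c₀) * ‖ψcyl p - γcyl s‖ = t ↔ ‖ψcyl p - γcyl s‖ = c₀ * t / 2 := by
    constructor
    · intro h
      rw [← h]
      field_simp
    · intro h
      rw [h]
      field_simp
  have hsq : 1 + (p.2 - s) ^ 2 = (c₀ * t / 2) ^ 2 ↔
      (p.2 - s) ^ 2 = Real.sqrt (c₀ ^ 2 * t ^ 2 / 4 - 1) ^ 2 := by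
    rw [Real.sq_sqrt hα]
    constructor <;> intro h <;> linarith
  rw [hsolve, norm_ψcyl_sub_γcyl, Real.sqrt_eq_iff_eq_sq (by positivity) (by linarith), hsq,
    sq_eq_sq_iff_eq_or_eq_neg, or_comm]
  refine or_congr ?_ ?_ <;> constructor <;> intro h <;> linarith

/-- On the cylinder, for `t > 2/c₀` and `α(t) = √(c₀²t²/4 − 1)`,
the set of ground points `(u,v) ∈ (0,π) × ℝ` at travel time `t` from `γ(s)` is
exactly `(0,π) × {s − α(t), s + α(t)}`; in particular it is infinite. -/
theorem cylinder_mirror_points_infinite (c₀ : ℝ) (hc₀ : 0 < c₀)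
    (s t : ℝ) (ht : 2 / c₀ < t) :
    {p : ℝ × ℝ | p.1 ∈ Set.Ioo 0 π ∧ (2 / c₀) * ‖ψcyl p - γcyl s‖ = t} =
      Set.Ioo 0 π ×ˢ
        ({s - Real.sqrt (c₀ ^ 2 * t ^ 2 / 4 - 1),
          s + Real.sqrt (c₀ ^ 2 * t ^ 2 / 4 - 1)} : Set ℝ) ∧
    {p : ℝ × ℝ | p.1 ∈ Set.Ioo 0 π ∧ (2 / c₀) * ‖ψcyl p - γcyl s‖ = t}.Infinite := by
  have heq : {p : ℝ × ℝ | p.1 ∈ Set.Ioo 0 π ∧ (2 / c₀) * ‖ψcyl p - γcyl s‖ = t} =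
      Set.Ioo 0 π ×ˢ
        ({s - Real.sqrt (c₀ ^ 2 * t ^ 2 / 4 - 1),
          s + Real.sqrt (c₀ ^ 2 * t ^ 2 / 4 - 1)} : Set ℝ) := by
    ext p
    simp only [Set.mem_ofPred_eq, Set.mem_prod, Set.mem_insert_iff, Set.mem_singleton_iff,
      travel_time_iff c₀ hc₀ s t ht p]
  refine ⟨heq, ?_⟩
  rw [heq]
  exact (Set.Ioo_infinite Real.pi_pos).prod_left (Set.insert_nonempty _ _)
end

section
/- Fix c₀ > 0 and s, t ∈ ℝ, and let w(v) = t − (2/c₀)·√((v−s)² + 1), v₊(w₀) = s + √(c₀²(w₀−t)²/4 − 1), v₋(w₀) = s − √(c₀²(w₀−t)²/4 − 1). Let φ : ℝ → ℝ be continuous with compact support contained in (−∞, t − 2/c₀). Then ∫_ℝ φ(w(v))·1_{[0,∞)}(v) dv = ∫_{−∞}^{t − 2/c₀} φ(w₀)·(c₀²/4)·((t−w₀)/√(c₀²(t−w₀)²/4 − 1))·(1_{[0,∞)}(v₋(w₀)) + 1_{[0,∞)}(v₊(w₀))) dw₀, where 1_{[0,∞)} denotes the indicator (Heaviside) function of [0,∞).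 -/
/-!
The map `w(v) = t − (2/c₀)√((v−s)² + 1)` is two-to-one onto `(−∞, t − 2/c₀)` away from the null set
`{s}`: on each half-line `ε (v − s) > 0`, with `ε = ±1`, its inverse is `w₀ ↦ s + ε R(w₀)`, where
`R(w₀) = √(c₀²(w₀−t)²/4 − 1)`. The derivative of this inverse has absolute value
`(c₀²/4)(t − w₀)/R(w₀)`, so the one-dimensional change of variables formula
(`integral_image_eq_integral_abs_deriv_smul`) turns the integral over each half-line into one over
`(−∞, t − 2/c₀)`, and adding the two gives the claim. Splitting and recombining need integrability,
which holds because `φ ∘ w` is continuous with compact support (`integrable_pairing`) and transfers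
through the change of variables (`branch_change_of_variables`).
-/

open MeasureTheory

/-- The half-width `R(w₀) = √(c²(w₀−t)²/4 − 1)`: the preimages of `w₀` under `w` are `s ± R(w₀)`. -/
noncomputable def branchRadius (c t w : ℝ) : ℝ := Real.sqrt (c ^ 2 * (w - t) ^ 2 / 4 - 1)

lemma one_lt_of_mem {c t w : ℝ} (hc : 0 < c) (hw : w < t - 2 / c) : 1 < c * (t - w) / 2 := by
  have h : 2 / c < t - w := by linarith
  rw [div_lt_iff₀ hc] at h
  linarith

lemma radicand_pos {c t w : ℝ} (hc : 0 < c) (hw : w < t - 2 / c) :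
    0 < c ^ 2 * (w - t) ^ 2 / 4 - 1 := by
  nlinarith [one_lt_of_mem hc hw]

lemma w_branch {c s t w e : ℝ} (hc : 0 < c) (he : e ^ 2 = 1) (hw : w < t - 2 / c) :
    t - (2 / c) * Real.sqrt ((s + e * branchRadius c t w - s) ^ 2 + 1) = w := by
  have h1 : (s + e * branchRadius c t w - s) ^ 2 + 1 = (c * (t - w) / 2) ^ 2 := by
    have h2 := Real.sq_sqrt (radicand_pos hc hw).le
    have h3 : (s + e * branchRadius c t w - s) ^ 2
        = e ^ 2 * Real.sqrt (c ^ 2 * (w - t) ^ 2 / 4 - 1) ^ 2 := by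
      unfold branchRadius; ring
    rw [h3, h2, he]; ring
  rw [h1, Real.sqrt_sq (by linarith [one_lt_of_mem hc hw])]
  field_simp
  ring

lemma branch_image {c s t e : ℝ} (hc : 0 < c) (he : e ^ 2 = 1) :
    (fun w => s + e * branchRadius c t w) '' Set.Iio (t - 2 / c) = {v | 0 < e * (v - s)} := by
  ext v
  simp only [Set.mem_image, Set.mem_Iio, Set.mem_ofPred_eq]
  constructor
  · rintro ⟨w, hw, rfl⟩
    have h : e * (s + e * branchRadius c t w - s) = e ^ 2 * branchRadius c t w := by ring
    rw [h, he, one_mul]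
    exact Real.sqrt_pos.2 (radicand_pos hc hw)
  · intro hv
    have hsq : (e * (v - s)) ^ 2 = (v - s) ^ 2 := by rw [mul_pow, he, one_mul]
    have hpos : 0 < (v - s) ^ 2 := by rw [← hsq]; positivity
    have hS := Real.sq_sqrt (show 0 ≤ (v - s) ^ 2 + 1 by positivity)
    refine ⟨t - (2 / c) * Real.sqrt ((v - s) ^ 2 + 1), ?_, ?_⟩
    · have h1 : 1 < Real.sqrt ((v - s) ^ 2 + 1) := by
        rw [Real.lt_sqrt (by norm_num)]; linarith
      have : 0 < 2 / c := by positivity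
      nlinarith
    · have h2 : c ^ 2 * (t - (2 / c) * Real.sqrt ((v - s) ^ 2 + 1) - t) ^ 2 / 4 - 1
          = (e * (v - s)) ^ 2 := by
        have h3 : c ^ 2 * (t - (2 / c) * Real.sqrt ((v - s) ^ 2 + 1) - t) ^ 2 / 4
            = Real.sqrt ((v - s) ^ 2 + 1) ^ 2 := by
          field_simp
          ring
        rw [h3, hS, hsq]; ring
      rw [branchRadius, h2, Real.sqrt_sq hv.le]
      linear_combination (v - s) * he

lemma branch_hasDerivAt {c s t w : ℝ} (e : ℝ) (hc : 0 < c) (hw : w < t - 2 / c) :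
    HasDerivAt (fun w => s + e * branchRadius c t w)
      (e * (c ^ 2 / 4 * ((w - t) / branchRadius c t w))) w := by
  have hp := radicand_pos hc hw
  have h1 : HasDerivAt (fun w => c ^ 2 * (w - t) ^ 2 / 4 - 1) (c ^ 2 * (w - t) / 2) w := by
    have := ((((hasDerivAt_id w).sub_const t).pow 2).const_mul (c ^ 2)).div_const 4
      |>.sub_const 1
    refine this.congr_deriv ?_
    simp only [id, Nat.cast_ofNat, pow_one, Nat.add_one_sub_one, mul_one]
    ring
  have h2 := ((h1.sqrt hp.ne').const_mul e).const_add s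
  refine h2.congr_deriv ?_
  have := (Real.sqrt_pos.2 hp).ne'
  unfold branchRadius
  field_simp
  ring

/-- Change of variables along one inverse branch `w₀ ↦ s + e R(w₀)`, `e = ±1`: the integrals of
`g` over the half-line `e (v − s) > 0` and of its pullback agree, together with the
integrability of the pullback. -/
lemma branch_change_of_variables {c s t e : ℝ} (hc : 0 < c) (he : e ^ 2 = 1) (g : ℝ → ℝ)
    (hg : Integrable g) :
    IntegrableOn (fun w => (c ^ 2 / 4 * ((t - w) / branchRadius c t w))
        * g (s + e * branchRadius c t w)) (Set.Iio (t - 2 / c)) ∧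
    ∫ v in {v | 0 < e * (v - s)}, g v =
      ∫ w in Set.Iio (t - 2 / c), (c ^ 2 / 4 * ((t - w) / branchRadius c t w))
        * g (s + e * branchRadius c t w) := by
  have hd : ∀ w ∈ Set.Iio (t - 2 / c), HasDerivWithinAt (fun w => s + e * branchRadius c t w)
      (e * (c ^ 2 / 4 * ((w - t) / branchRadius c t w))) (Set.Iio (t - 2 / c)) w :=
    fun w hw => (branch_hasDerivAt e hc hw).hasDerivWithinAt
  have hinj : Set.InjOn (fun w => s + e * branchRadius c t w) (Set.Iio (t - 2 / c)) := by
    intro a ha b hb hab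
    have hab' : s + e * branchRadius c t a = s + e * branchRadius c t b := hab
    rw [← w_branch (s := s) hc he ha, ← w_branch (s := s) hc he hb, hab']
  have habs : ∀ w ∈ Set.Iio (t - 2 / c), |e * (c ^ 2 / 4 * ((w - t) / branchRadius c t w))|
      • g (s + e * branchRadius c t w)
      = (c ^ 2 / 4 * ((t - w) / branchRadius c t w)) * g (s + e * branchRadius c t w) := by
    intro w hw
    have he' : |e| = 1 := by rcases sq_eq_sq_iff_eq_or_eq_neg.1 (he.trans (one_pow 2).symm) with h | h <;> simp [h]
    have hlt : w - t < 0 := by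
      have : 0 < 2 / c := by positivity
      have := Set.mem_Iio.1 hw
      linarith
    rw [abs_mul, he', one_mul, abs_mul, abs_of_pos (by positivity : 0 < c ^ 2 / 4), abs_div,
      abs_of_neg hlt,
      abs_of_nonneg (show 0 ≤ branchRadius c t w from Real.sqrt_nonneg _), smul_eq_mul, neg_sub]
  rw [← branch_image (t := t) hc he]
  constructor
  · exact ((integrableOn_image_iff_integrableOn_abs_deriv_smul measurableSet_Iio hd hinj g).1
      hg.integrableOn).congr_fun habs measurableSet_Iio
  · rw [integral_image_eq_integral_abs_deriv_smul measurableSet_Iio hd hinj g]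
    exact setIntegral_congr_fun measurableSet_Iio habs

lemma integrable_pairing {c s t : ℝ} (hc : 0 < c) {φ : ℝ → ℝ} (hφ : Continuous φ)
    (hφc : HasCompactSupport φ) :
    Integrable (fun v : ℝ => φ (t - (2 / c) * Real.sqrt ((v - s) ^ 2 + 1)) *
        Set.indicator (Set.Ici (0 : ℝ)) (fun _ => (1 : ℝ)) v) := by
  have hcont : Continuous (fun v : ℝ => φ (t - (2 / c) * Real.sqrt ((v - s) ^ 2 + 1))) := by
    fun_prop
  have hcs : HasCompactSupport
      (fun v : ℝ => φ (t - (2 / c) * Real.sqrt ((v - s) ^ 2 + 1))) := by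
    obtain ⟨m, hm⟩ := hφc.isCompact.bddBelow
    -- `w(v) < m` as soon as `|v − s| > c(t − m)/2`
    refine HasCompactSupport.intro
      (isCompact_Icc (a := s - c * (t - m) / 2) (b := s + c * (t - m) / 2)) fun v hv => ?_
    by_contra hne
    have h1 := hm (subset_tsupport φ (Function.mem_support.2 hne))
    have h2 : |v - s| ≤ Real.sqrt ((v - s) ^ 2 + 1) := Real.abs_le_sqrt (by linarith)
    have h3 : Real.sqrt ((v - s) ^ 2 + 1) ≤ c * (t - m) / 2 := by
      have h4 : (2 / c) * Real.sqrt ((v - s) ^ 2 + 1) ≤ t - m := by linarith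
      rw [div_mul_eq_mul_div, div_le_iff₀ hc] at h4
      linarith
    have h5 := abs_le.1 (h2.trans h3)
    exact hv ⟨by linarith [h5.1], by linarith [h5.2]⟩
  have h := (hcont.integrable_of_hasCompactSupport (μ := volume) hcs).indicator
    (measurableSet_Ici (a := (0 : ℝ)))
  refine h.congr (Filter.Eventually.of_forall fun v => ?_)
  by_cases hv : v ∈ Set.Ici (0 : ℝ) <;> simp [Set.indicator, hv]

/-- Change of variables for the SAR delta pairing: for
continuous `φ` compactly supported in `(−∞, t − 2/c₀)`, with
`w(v) = t − (2/c₀)√((v−s)² + 1)` and inverse branches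
`v±(w₀) = s ± √(c₀²(w₀−t)²/4 − 1)`,
`∫ φ(w(v))·1_{[0,∞)}(v) dv = ∫_{w₀ < t−2/c₀} φ(w₀)·(c₀²/4)·(t−w₀)/√(c₀²(t−w₀)²/4 − 1)
  ·(1_{[0,∞)}(v₋(w₀)) + 1_{[0,∞)}(v₊(w₀))) dw₀`. -/
theorem delta_pullback_heaviside (c₀ s t : ℝ) (hc₀ : 0 < c₀)
    (φ : ℝ → ℝ) (hφ : Continuous φ) (hφc : HasCompactSupport φ)
    (hφsupp : tsupport φ ⊆ Set.Iio (t - 2 / c₀)) :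
    ∫ v : ℝ, φ (t - (2 / c₀) * Real.sqrt ((v - s) ^ 2 + 1)) *
        Set.indicator (Set.Ici (0 : ℝ)) (fun _ => (1 : ℝ)) v =
      ∫ w₀ in Set.Iio (t - 2 / c₀),
        φ w₀ * ((c₀ ^ 2 / 4) *
            ((t - w₀) / Real.sqrt (c₀ ^ 2 * (t - w₀) ^ 2 / 4 - 1))) *
          (Set.indicator (Set.Ici (0 : ℝ)) (fun _ => (1 : ℝ))
              (s - Real.sqrt (c₀ ^ 2 * (w₀ - t) ^ 2 / 4 - 1)) +
           Set.indicator (Set.Ici (0 : ℝ)) (fun _ => (1 : ℝ))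
              (s + Real.sqrt (c₀ ^ 2 * (w₀ - t) ^ 2 / 4 - 1))) := by
  have hg := integrable_pairing (s := s) (t := t) hc₀ hφ hφc
  obtain ⟨hi₁, he₁⟩ := branch_change_of_variables (s := s) (t := t) (e := 1) hc₀ (by norm_num) _ hg
  obtain ⟨hi₂, he₂⟩ := branch_change_of_variables (s := s) (t := t) (e := -1) hc₀ (by norm_num) _ hg
  have hset₁ : {v : ℝ | 0 < 1 * (v - s)} = Set.Ioi s := by ext v; simp
  have hset₂ : {v : ℝ | 0 < -1 * (v - s)} = Set.Iio s := by ext v; simp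
  rw [hset₁] at he₁
  rw [hset₂] at he₂
  rw [← intervalIntegral.integral_Iic_add_Ioi (b := s) hg.integrableOn hg.integrableOn,
    integral_Iic_eq_integral_Iio, he₁, he₂, ← integral_add hi₂ hi₁]
  refine setIntegral_congr_fun measurableSet_Iio fun w hw => ?_
  have hR : Real.sqrt (c₀ ^ 2 * (w - t) ^ 2 / 4 - 1) = branchRadius c₀ t w := rfl
  have hR' : Real.sqrt (c₀ ^ 2 * (t - w) ^ 2 / 4 - 1) = branchRadius c₀ t w := by
    rw [branchRadius, sub_sq_comm]
  have hs : s - branchRadius c₀ t w = s + -1 * branchRadius c₀ t w := by ring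
  have hs' : s + branchRadius c₀ t w = s + 1 * branchRadius c₀ t w := by ring
  simp only [hR, hR']
  rw [w_branch hc₀ (by norm_num) hw, w_branch hc₀ (by norm_num) hw, hs, hs']
  ring
end
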